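/- A harmonic measure determines its domain: if Ω and Ω' are simply connected hyperbolic domains with w ∈ Ω ∩ Ω' and ω_Ω(w, ·) = ω_{Ω'}(w, ·) as measures, then Ω = Ω'. -/

import Mathlib

/-!
The domain is recovered from `μ` and `w` alone through the Green potential
`u q = ∫ log ‖q - ζ‖ dμ(ζ) - log ‖q - w‖`: a point `q` lies in `Ω` if and only if `q = w` or
`u q ≠ 0` (`IsHarmonicMeasure.mem_iff`). Two domains sharing `w` and `μ` are therefore equal.

*Vanishing off `Ω`* (`IsHarmonicMeasure.log_norm_sub`). For `q ∉ Ω` the function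
`z ↦ log ‖z - q‖` is harmonic on `Ω`, but it is unbounded, and the reproducing property of `μ` only
speaks of bounded functions. Since `Ω` is simply connected, it carries a branch of `log (z - q)`, so
every circle about `q` meets the complement of `Ω`. Choosing a point `s t ∉ Ω` at distance `t` from
`q`, measurably in `t`, and averaging `log ‖z - s (r t)‖` over `t ∈ [1, 2]` gives a function
`logPot s r` which is continuous on the plane, harmonic on `Ω`, and within a constant of
`log (‖z - q‖ + 2 r)`. Differences of two such functions are bounded, hence reproduced by `μ`.
Letting one radius tend to infinity (Fatou, then dominated convergence) shows that `μ` has a finite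
logarithmic moment and reproduces each `logPot s r`; letting `r → 0` then gives the same for
`log ‖z - q‖`, together with `μ {q} = 0`.

*Positivity on `Ω \ {w}`.* There `u` is continuous and satisfies the mean value property, and it
tends to `+∞` at `w`, so by connectedness it attains no minimum on `Ω \ {w}`
(`IsHarmonicMeasure.greenPot_ne_min`). No regularity of the boundary is available, but
`u` cannot stay below a negative constant along a sequence approaching the boundary or infinity:
each `q n` is compared with a suitable near point `q' n ∉ Ω`, where `u` vanishes and
`‖q' n - ζ‖ ≤ 5 ‖q n - ζ‖` for all `ζ ∉ Ω`, so that Fatou's lemma applies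
(`IsHarmonicMeasure.not_greenPot_le`). Hence a negative value of `u` would force a minimum to be
attained, so `u ≥ 0`; and a zero of `u` would be a minimum, so `u > 0`.
-/

open MeasureTheory Metric Filter Topology

noncomputable section

/-- Mean value property over balls: the notion of harmonicity used here. -/
def HasMVP (h : ℂ → ℝ) (Ω : Set ℂ) : Prop :=
  ∀ z ∈ Ω, ∀ r : ℝ, 0 < r → closedBall z r ⊆ Ω →
    h z = ⨍ x in ball z r, h x

/-- `μ` is the harmonic measure of the domain `Ω` at the point `w`:
a probability measure on `∂Ω` reproducing values of bounded harmonic functions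
continuous up to the boundary. -/
def IsHarmonicMeasure (Ω : Set ℂ) (w : ℂ) (μ : Measure ℂ) : Prop :=
  IsProbabilityMeasure μ ∧ μ (frontier Ω)ᶜ = 0 ∧
  ∀ h : ℂ → ℝ, ContinuousOn h (closure Ω) → (∃ M, ∀ x, |h x| ≤ M) →
    HasMVP h Ω → h w = ∫ x, h x ∂μ

/-- Carathéodory convergence of pointed domains. -/
def CaratheodoryConv (Ω : ℕ → Set ℂ) (w : ℕ → ℂ) (Ωl : Set ℂ) (wl : ℂ) : Prop :=
  Tendsto w atTop (nhds wl) ∧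
  (∀ K : Set ℂ, IsCompact K → K ⊆ Ωl → ∀ᶠ n in atTop, K ⊆ Ω n) ∧
  (∀ U : Set ℂ, IsOpen U → IsConnected U → wl ∈ U →
    (∃ᶠ n in atTop, U ⊆ Ω n) → U ⊆ Ωl)

/-- `(Ω n, w n)` and `(Ωl, wl)` have arbitrarily good common interior approximations. -/
def CommonInteriorApprox (Ω : ℕ → Set ℂ) (w : ℕ → ℂ) (Ωl : Set ℂ) (wl : ℂ) : Prop :=
  Tendsto w atTop (nhds wl) ∧
  ∀ ε : ℝ, 0 < ε → ∃ N : ℕ, ∃ K : Set ℂ, IsClosed K ∧ IsConnected K ∧ wl ∈ K ∧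
    K ⊆ Ωl ∧ (∀ n, N ≤ n → K ⊆ Ω n) ∧
    ∀ x ∈ frontier K, infDist x (frontier Ωl) < ε ∧
      ∀ n, N ≤ n → infDist x (frontier (Ω n)) < ε

/-- Weak convergence of measures: integrals of bounded continuous functions converge. -/
def WeakConv (μ : ℕ → Measure ℂ) (ν : Measure ℂ) : Prop :=
  ∀ f : BoundedContinuousFunction ℂ ℝ, Tendsto (fun n => ∫ x, f x ∂(μ n)) atTop (nhds (∫ x, f x ∂ν))

/-- Uniform regularity of a sequence of domains, expressed via the families
`μ n z` of harmonic measures of `Ω n` at `z`. -/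
def UniformlyRegular (Ω : ℕ → Set ℂ) (μ : ℕ → ℂ → Measure ℂ) : Prop :=
  ∀ δ : ℝ, 0 < δ → ∃ ε : ℝ, 0 < ε ∧ ∀ n, ∀ z ∈ Ω n,
    infDist z (frontier (Ω n)) < ε → ENNReal.ofReal (1 - δ) < μ n z (ball z δ)

/-- A domain is regular iff the support of its harmonic measure (at any interior
point) is the whole boundary. -/
def IsRegularDomain (Ω : Set ℂ) (ν : ℂ → Measure ℂ) : Prop :=
  ∀ w ∈ Ω, ∀ x ∈ frontier Ω, ∀ r : ℝ, 0 < r → 0 < ν w (ball x r)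

/-! ### Logarithmic potentials and the mean value property -/

/-- The mean value property over circles implies the one over balls, by polar coordinates. -/
theorem setIntegral_ball_of_circleAverage {f : ℂ → ℝ} {z : ℂ} {R : ℝ} (hR : 0 < R)
    (hf : ContinuousOn f (closedBall z R))
    (hc : ∀ r, 0 < r → r < R → Real.circleAverage f z r = f z) :
    ∫ x in ball z R, f x = Real.pi * R ^ 2 * f z := by
  set g : ℝ × ℝ → ℝ := fun p => p.1 * f (z + Complex.polarCoord.symm p) with hg
  have h1 : ∫ x in ball z R, f x
      = ∫ p in Set.Ioo 0 R ×ˢ Set.Ioo (-Real.pi) Real.pi, g p := by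
    rw [← integral_indicator measurableSet_ball,
      ← integral_add_left_eq_self _ z, ← Complex.integral_comp_polarCoord_symm,
      show polarCoord.target = Set.Ioi (0 : ℝ) ×ˢ Set.Ioo (-Real.pi) Real.pi from rfl,
      ← integral_indicator (measurableSet_Ioi.prod measurableSet_Ioo),
      ← integral_indicator (measurableSet_Ioo.prod measurableSet_Ioo)]
    congr 1
    ext p
    by_cases h0 : 0 < p.1
    · by_cases hθ : p.2 ∈ Set.Ioo (-Real.pi) Real.pi
      · have hm : z + Complex.polarCoord.symm p ∈ ball z R ↔ p.1 < R := by
          rw [mem_ball, dist_self_add_left, Complex.norm_polarCoord_symm, abs_of_pos h0]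
        by_cases hpR : p.1 < R
        · rw [Set.indicator_of_mem (show p ∈ Set.Ioi (0:ℝ) ×ˢ Set.Ioo (-Real.pi) Real.pi from
            ⟨h0, hθ⟩), Set.indicator_of_mem (hm.2 hpR),
            Set.indicator_of_mem (show p ∈ Set.Ioo (0:ℝ) R ×ˢ Set.Ioo (-Real.pi) Real.pi from
            ⟨⟨h0, hpR⟩, hθ⟩)]
          rfl
        · rw [Set.indicator_of_mem (show p ∈ Set.Ioi (0:ℝ) ×ˢ Set.Ioo (-Real.pi) Real.pi from
            ⟨h0, hθ⟩), Set.indicator_of_notMem (fun h => hpR (hm.1 h)),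
            Set.indicator_of_notMem (fun h => hpR h.1.2), smul_zero]
      · rw [Set.indicator_of_notMem (fun h => hθ h.2), Set.indicator_of_notMem (fun h => hθ h.2)]
    · rw [Set.indicator_of_notMem (fun h => h0 h.1), Set.indicator_of_notMem (fun h => h0 h.1.1)]
  have hsymm : Continuous fun p : ℝ × ℝ => Complex.polarCoord.symm p := by
    simp only [Complex.polarCoord_symm_apply]; fun_prop
  have hint : IntegrableOn g (Set.Ioo 0 R ×ˢ Set.Ioo (-Real.pi) Real.pi) := by
    refine IntegrableOn.mono_set (t := Set.Icc 0 R ×ˢ Set.Icc (-Real.pi) Real.pi) ?_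
      (Set.prod_mono Set.Ioo_subset_Icc_self Set.Ioo_subset_Icc_self)
    refine ContinuousOn.integrableOn_compact (isCompact_Icc.prod isCompact_Icc) ?_
    refine continuous_fst.continuousOn.mul (hf.comp (by fun_prop) ?_)
    rintro p ⟨hp, -⟩
    rw [mem_closedBall, dist_self_add_left, Complex.norm_polarCoord_symm, abs_of_nonneg hp.1]
    exact hp.2
  rw [h1, Measure.volume_eq_prod, setIntegral_prod _ (by rwa [← Measure.volume_eq_prod])]
  have h2 : ∀ r ∈ Set.Ioo 0 R, ∫ θ in Set.Ioo (-Real.pi) Real.pi, g (r, θ)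
      = 2 * Real.pi * f z * r := by
    intro r hr
    have := hc r hr.1 hr.2
    rw [Real.circleAverage_eq_integral_add (-Real.pi)] at this
    rw [intervalIntegral.integral_comp_add_right (fun t => f (circleMap z r t))] at this
    rw [← integral_Ioc_eq_integral_Ioo, ← intervalIntegral.integral_of_le (by linarith [Real.pi_pos])]
    simp only [hg]
    rw [intervalIntegral.integral_const_mul]
    have h3 : ∀ θ, f (z + Complex.polarCoord.symm (r, θ)) = f (circleMap z r θ) := by
      intro θ
      simp [circleMap, Complex.exp_mul_I]
    simp only [h3]
    have h4 : (0:ℝ) + -Real.pi = -Real.pi := by ring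
    have h5 : 2 * Real.pi + -Real.pi = Real.pi := by ring
    rw [h4, h5, smul_eq_mul] at this
    have hpi := Real.pi_pos
    field_simp at this
    rw [this]; ring
  rw [setIntegral_congr_fun measurableSet_Ioo h2, ← integral_Ioc_eq_integral_Ioo,
    ← intervalIntegral.integral_of_le hR.le, intervalIntegral.integral_const_mul, integral_id]
  ring

theorem setAverage_ball_eq {f : ℂ → ℝ} {z : ℂ} {R c : ℝ} (hR : 0 < R)
    (h : ∫ x in ball z R, f x = Real.pi * R ^ 2 * c) : ⨍ x in ball z R, f x = c := by
  have hpi := Real.pi_pos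
  rw [setAverage_eq, h, Measure.real, Complex.volume_ball]
  simp only [ENNReal.toReal_mul, ENNReal.toReal_pow, ENNReal.toReal_ofReal hR.le,
    ENNReal.coe_toReal, NNReal.coe_real_pi, smul_eq_mul]
  field_simp

theorem abs_log_sub_log_le {a b k : ℝ} (ha : 0 < a) (hb : 0 < b) (h1 : a ≤ k * b)
    (h2 : b ≤ k * a) : |Real.log a - Real.log b| ≤ Real.log k := by
  have hk : 0 < k := pos_of_mul_pos_left (ha.trans_le h1) hb.le
  have h3 := Real.log_le_log ha h1
  have h4 := Real.log_le_log hb h2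
  rw [Real.log_mul hk.ne' hb.ne'] at h3
  rw [Real.log_mul hk.ne' ha.ne'] at h4
  rw [abs_le]; constructor <;> linarith

theorem abs_log_norm_sub_le {x z s : ℂ} {R δ : ℝ} (hR : 0 < R) (hδ : 0 < δ)
    (hs : R + δ ≤ ‖z - s‖) (hx : x ∈ closedBall z R) :
    |Real.log ‖x - s‖ - Real.log ‖z - s‖| ≤ Real.log (2 + R / δ) := by
  rw [mem_closedBall, dist_eq_norm] at hx
  have h1 : ‖x - s‖ ≤ ‖x - z‖ + ‖z - s‖ := by
    simpa using norm_add_le (x - z) (z - s)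
  have h2 : ‖z - s‖ ≤ ‖x - z‖ + ‖x - s‖ := by
    have := norm_sub_le (x - s) (x - z)
    rw [show x - s - (x - z) = z - s by ring] at this; linarith
  have h5 : 0 < ‖x - s‖ := by linarith
  have h6 : R ≤ R / δ * ‖x - s‖ := by
    rw [div_mul_eq_mul_div, le_div_iff₀ hδ]
    exact mul_le_mul_of_nonneg_left (by linarith) hR.le
  have h7 : 0 ≤ R / δ * ‖z - s‖ := by positivity
  exact abs_log_sub_log_le h5 (by linarith) (by nlinarith) (by nlinarith)

theorem integrable_log_norm_sub_of_mem {T : Type*} [MeasurableSpace T] {τ : Measure T}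
    [IsFiniteMeasure τ] {s : T → ℂ} (hs : Measurable s) {x z : ℂ} {R δ : ℝ} (hR : 0 < R)
    (hδ : 0 < δ) (hsep : ∀ᵐ t ∂τ, R + δ ≤ ‖z - s t‖)
    (hint : Integrable (fun t => Real.log ‖z - s t‖) τ) (hx : x ∈ closedBall z R) :
    Integrable (fun t => Real.log ‖x - s t‖) τ := by
  refine (hint.abs.add (integrable_const (Real.log (2 + R / δ)))).mono'
    (by fun_prop : Measurable _).aestronglyMeasurable ?_
  filter_upwards [hsep] with t ht
  have := abs_log_norm_sub_le hR hδ ht hx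
  rw [Real.norm_eq_abs]
  simp only [Pi.add_apply]
  have h8 := abs_sub_abs_le_abs_sub (Real.log ‖x - s t‖) (Real.log ‖z - s t‖)
  linarith

/-- Harmonicity of `log ‖· - s‖` off `s`, in the form of the mean value property over balls
whose closure avoids `s`. -/
theorem setIntegral_ball_log_norm_sub {z s : ℂ} {R δ : ℝ} (hR : 0 < R) (hδ : 0 < δ)
    (hs : R + δ ≤ ‖z - s‖) :
    ∫ x in ball z R, Real.log ‖x - s‖ = Real.pi * R ^ 2 * Real.log ‖z - s‖ := by
  refine setIntegral_ball_of_circleAverage hR ?_ ?_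
  · refine ContinuousOn.log (by fun_prop) ?_
    intro x hx h0
    have : x = s := by simpa [sub_eq_zero] using h0
    rw [mem_closedBall, dist_eq_norm, this, norm_sub_rev] at hx
    linarith
  · intro r h0 hr
    rw [circleAverage_log_norm_sub_const_eq_log_radius_add_posLog h0.ne']
    rw [Real.posLog_eq_log, Real.log_mul (by positivity) (by linarith), Real.log_inv]
    · ring
    · rw [abs_of_nonneg (by positivity), inv_mul_eq_div, one_le_div h0]
      linarith

/-- A logarithmic potential has the mean value property over the balls at positive distance from
its charge, by Fubini. The charge is the image of `τ` under `s`, which covers both the averages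
`logPot` and the potential of the harmonic measure. -/
theorem setIntegral_ball_logPotential {T : Type*} [MeasurableSpace T] {τ : Measure T}
    [IsFiniteMeasure τ] {s : T → ℂ} (hs : Measurable s) {z : ℂ} {R δ : ℝ} (hR : 0 < R)
    (hδ : 0 < δ) (hsep : ∀ᵐ t ∂τ, R + δ ≤ ‖z - s t‖)
    (hint : Integrable (fun t => Real.log ‖z - s t‖) τ) :
    IntegrableOn (fun x => ∫ t, Real.log ‖x - s t‖ ∂τ) (ball z R) ∧
    ∫ x in ball z R, ∫ t, Real.log ‖x - s t‖ ∂τ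
      = Real.pi * R ^ 2 * ∫ t, Real.log ‖z - s t‖ ∂τ := by
  have hfin : IsFiniteMeasure (volume.restrict (ball z R)) :=
    ⟨by rw [Measure.restrict_apply_univ]; exact measure_ball_lt_top⟩
  have hprod : Integrable (fun p : ℂ × T => Real.log ‖p.1 - s p.2‖)
      ((volume.restrict (ball z R)).prod τ) := by
    have hdom : Integrable (fun p : ℂ × T => |Real.log ‖z - s p.2‖| + Real.log (2 + R / δ))
        ((volume.restrict (ball z R)).prod τ) :=
      (hint.abs.comp_snd _).add (integrable_const _)
    refine hdom.mono' (by fun_prop : Measurable _).aestronglyMeasurable ?_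
    have e1 : ∀ᵐ p ∂((volume.restrict (ball z R)).prod τ), p.1 ∈ ball z R :=
      Measure.quasiMeasurePreserving_fst.ae (ae_restrict_mem measurableSet_ball)
    have e2 : ∀ᵐ p ∂((volume.restrict (ball z R)).prod τ), R + δ ≤ ‖z - s p.2‖ :=
      Measure.quasiMeasurePreserving_snd.ae hsep
    filter_upwards [e1, e2] with p h1 h2
    have := abs_log_norm_sub_le hR hδ h2 (ball_subset_closedBall h1)
    rw [Real.norm_eq_abs]
    have h8 := abs_sub_abs_le_abs_sub (Real.log ‖p.1 - s p.2‖) (Real.log ‖z - s p.2‖)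
    linarith
  refine ⟨hprod.integral_prod_left, ?_⟩
  rw [integral_integral_swap hprod, ← integral_const_mul]
  refine integral_congr_ae ?_
  filter_upwards [hsep] with t ht
  exact setIntegral_ball_log_norm_sub hR hδ ht

/-! ### Averaged logarithmic potentials along a radial section -/

/-- `s t` is, measurably in `t ≥ 0`, a point at distance `t` from `q`. Negative `t` are
unconstrained. -/
def IsRadSection (q : ℂ) (s : ℝ → ℂ) : Prop :=
  Measurable s ∧ ∀ t, 0 ≤ t → ‖s t - q‖ = t

/-- The average over `t ∈ [1, 2]` of `log ‖z - s (r t)‖`: the logarithmic potential of a unit charge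
spread over the points of the section `s` whose distance to the centre is between `r` and `2 r`. -/
def logPot (s : ℝ → ℂ) (r : ℝ) (z : ℂ) : ℝ :=
  ∫ t in Set.Icc (1 : ℝ) 2, Real.log ‖z - s (r * t)‖

/-- A Hölder bound for the logarithm with exponent `1 / 2`; its singularity in `a` and `b` is
integrable on a line. -/
theorem abs_log_sub_log_le_sqrt {a b : ℝ} (ha : 0 < a) (hb : 0 < b) :
    |Real.log a - Real.log b| ≤ 2 * √|a - b| * ((√a)⁻¹ + (√b)⁻¹) := by
  wlog hab : b ≤ a generalizing a b
  · have := this hb ha (le_of_not_ge hab)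
    rwa [abs_sub_comm, abs_sub_comm b a, add_comm] at this
  rw [abs_of_nonneg (sub_nonneg.2 (Real.log_le_log hb hab)), abs_of_nonneg (sub_nonneg.2 hab)]
  have h1 : Real.log a - Real.log b = 2 * Real.log (√a / √b) := by
    rw [Real.log_div (by positivity) (by positivity), Real.log_sqrt ha.le, Real.log_sqrt hb.le]
    ring
  have h2 := Real.log_le_sub_one_of_pos (show 0 < √a / √b by positivity)
  have h3 : √a ≤ √(a - b) + √b := by
    rw [Real.sqrt_le_left (by positivity)]
    nlinarith [Real.sq_sqrt hb.le, Real.sq_sqrt (sub_nonneg.2 hab), Real.sqrt_nonneg b,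
      Real.sqrt_nonneg (a - b), mul_nonneg (Real.sqrt_nonneg b) (Real.sqrt_nonneg (a - b))]
  have h4 : √a / √b - 1 ≤ √(a - b) * (√b)⁻¹ := by
    rw [div_sub_one (by positivity), div_eq_mul_inv]
    gcongr; linarith
  have h5 : 0 ≤ √(a - b) * (√a)⁻¹ := by positivity
  rw [h1]; linarith

/-- The bound `K` is uniform in the position `c` of the singularity. -/
theorem exists_integral_inv_sqrt_le : ∃ K : ℝ, ∀ c : ℝ,
    IntegrableOn (fun t => (√|c - t|)⁻¹) (Set.Icc 1 2) ∧
    ∫ t in Set.Icc (1 : ℝ) 2, (√|c - t|)⁻¹ ≤ K := by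
  set φ : ℝ → ℝ := (Set.Ioc (-1 : ℝ) 1).indicator (fun y => y ^ (-(1/2) : ℝ) + (-y) ^ (-(1/2) : ℝ)) with hφ
  have h1 : IntervalIntegrable (fun y : ℝ => y ^ (-(1/2) : ℝ)) volume (-1) 1 :=
    intervalIntegral.intervalIntegrable_rpow' (by norm_num)
  have h2 : IntervalIntegrable (fun y : ℝ => (-y) ^ (-(1/2) : ℝ)) volume (-1) 1 := by
    simpa using ((IntervalIntegrable.iff_comp_neg (by simp)).1 h1).symm
  have hφi : Integrable φ := by
    rw [hφ, integrable_indicator_iff measurableSet_Ioc]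
    exact (intervalIntegrable_iff_integrableOn_Ioc_of_le (by norm_num)).1 (h1.add h2)
  have hφ0 : ∀ y, 0 ≤ φ y := by
    intro y
    refine Set.indicator_nonneg ?_ y
    intro y _
    rcases le_total 0 y with h | h
    · have := Real.rpow_nonneg h (-(1/2) : ℝ)
      rcases h.eq_or_lt with rfl | h'
      · simp
      -- for a negative base, `rpow` with exponent `-1/2` has the factor `cos (-π / 2) = 0`, so of the two
      -- summands of `φ` only the one with positive base survives
      · rw [Real.rpow_def_of_neg (by linarith : -y < 0)]
        rw [show (-(1/2) : ℝ) * Real.pi = -(Real.pi / 2) by ring]; simpa using this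
    · have := Real.rpow_nonneg (neg_nonneg.2 h) (-(1/2) : ℝ)
      rcases h.eq_or_lt with rfl | h'
      · simp
      · rw [Real.rpow_def_of_neg h']
        rw [show (-(1/2) : ℝ) * Real.pi = -(Real.pi / 2) by ring]; simpa using this
  have hφ1 : ∀ y, (√|y|)⁻¹ ≤ φ y + 1 := by
    intro y
    rcases eq_or_ne y 0 with rfl | h0
    · simp; linarith [hφ0 0]
    by_cases hy : y ∈ Set.Ioc (-1 : ℝ) 1
    · rw [hφ, Set.indicator_of_mem hy]
      rcases lt_or_gt_of_ne h0 with h | h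
      · rw [Real.rpow_def_of_neg h, show (-(1/2) : ℝ) * Real.pi = -(Real.pi / 2) by ring,
          abs_of_neg h, Real.sqrt_eq_rpow, ← Real.rpow_neg (by linarith)]
        simp
      · rw [Real.rpow_def_of_neg (by linarith : -y < 0),
          show (-(1/2) : ℝ) * Real.pi = -(Real.pi / 2) by ring,
          abs_of_pos h, Real.sqrt_eq_rpow, ← Real.rpow_neg (by linarith)]
        simp
    · have : 1 ≤ |y| := by
        by_contra! h
        rw [abs_lt] at h
        exact hy ⟨h.1, h.2.le⟩
      have h3 : (√|y|)⁻¹ ≤ 1 := inv_le_one_of_one_le₀ (Real.one_le_sqrt.2 this)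
      linarith [hφ0 y]
  refine ⟨(∫ y, φ y) + 1, fun c => ?_⟩
  have hi : Integrable (fun t => φ (c - t)) := hφi.comp_sub_left c
  have hi1 : IntegrableOn (fun t => φ (c - t) + 1) (Set.Icc 1 2) :=
    hi.integrableOn.add (by simp)
  have hi2 : IntegrableOn (fun t => (√|c - t|)⁻¹) (Set.Icc 1 2) := by
    refine hi1.mono' (by fun_prop : Measurable _).aestronglyMeasurable ?_
    refine ae_of_all _ fun t => ?_
    rw [Real.norm_of_nonneg (by positivity)]
    exact hφ1 _
  refine ⟨hi2, ?_⟩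
  calc _ ≤ ∫ t in Set.Icc (1 : ℝ) 2, (φ (c - t) + 1) :=
        setIntegral_mono hi2 hi1 fun t => hφ1 _
    _ = (∫ t in Set.Icc (1 : ℝ) 2, φ (c - t)) + 1 := by
        rw [integral_add hi.integrableOn (by simp)]; norm_num
    _ ≤ (∫ t, φ (c - t)) + 1 := by
        gcongr
        · exact ae_of_all _ fun t => hφ0 _
        · exact Measure.restrict_le_self
    _ = _ := by rw [integral_sub_left_eq_self φ volume c]

theorem IsRadSection.mul_abs_le {q : ℂ} {s : ℝ → ℂ} (hs : IsRadSection q s) {r t : ℝ}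
    (hr : 0 < r) (ht : t ∈ Set.Icc (1:ℝ) 2) (z : ℂ) :
    r * |‖z - q‖ / r - t| ≤ ‖z - s (r * t)‖ := by
  have h1 := hs.2 (r * t) (mul_nonneg hr.le (by linarith [ht.1]))
  have h2 := abs_norm_sub_norm_le (z - q) (s (r * t) - q)
  rw [h1] at h2
  calc r * |‖z - q‖ / r - t| = |‖z - q‖ - r * t| := by
        rw [← abs_of_pos hr, ← abs_mul, abs_of_pos hr]; congr 1; field_simp
    _ ≤ _ := by simpa using h2

theorem IsRadSection.norm_bounds {q : ℂ} {s : ℝ → ℂ} (hs : IsRadSection q s) {r t : ℝ}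
    (hr : 0 < r) (ht : t ∈ Set.Icc (1:ℝ) 2) (z : ℂ) :
    ‖z - s (r * t)‖ ≤ ‖z - q‖ + 2 * r ∧ ‖z - q‖ ≤ ‖z - s (r * t)‖ + 2 * r
      ∧ r ≤ ‖z - s (r * t)‖ + ‖z - q‖ := by
  have h1 := hs.2 (r * t) (mul_nonneg hr.le (by linarith [ht.1]))
  have h2 := abs_norm_sub_norm_le (z - q) (s (r * t) - q)
  have h3 := norm_sub_le (z - q) (s (r * t) - q)
  rw [h1] at h2 h3
  rw [abs_le] at h2
  simp only [sub_sub_sub_cancel_right] at h2 h3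
  refine ⟨?_, ?_, ?_⟩ <;> nlinarith [ht.1, ht.2]

theorem IsRadSection.pos_and_inv_sqrt_le {q : ℂ} {s : ℝ → ℂ} (hs : IsRadSection q s) {r t : ℝ}
    (hr : 0 < r) (ht : t ∈ Set.Icc (1:ℝ) 2) {z : ℂ} (hne : ‖z - q‖ / r ≠ t) :
    0 < ‖z - s (r * t)‖ ∧ (√‖z - s (r * t)‖)⁻¹ ≤ (√r)⁻¹ * (√|‖z - q‖ / r - t|)⁻¹ := by
  have h1 := hs.mul_abs_le hr ht z
  have h2 : 0 < |‖z - q‖ / r - t| := abs_pos.2 (sub_ne_zero.2 hne)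
  have h3 : 0 < r * |‖z - q‖ / r - t| := mul_pos hr h2
  refine ⟨h3.trans_le h1, ?_⟩
  rw [← mul_inv, ← Real.sqrt_mul hr.le]
  exact inv_anti₀ (Real.sqrt_pos.2 h3) (Real.sqrt_le_sqrt h1)

theorem ae_ne_Icc (c : ℝ) : ∀ᵐ t ∂(volume.restrict (Set.Icc (1:ℝ) 2)),
    t ∈ Set.Icc (1:ℝ) 2 ∧ c ≠ t := by
  have h1 : ∀ᵐ t ∂(volume.restrict (Set.Icc (1:ℝ) 2)), t ≠ c :=
    ae_restrict_of_ae (Measure.ae_ne _ _)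
  filter_upwards [h1, ae_restrict_mem measurableSet_Icc] with t h h' using ⟨h', h.symm⟩

/-- Comparison of the integrand of `logPot` with `log (‖z - q‖ + 2 r)`; the error is integrable in
`t`, uniformly in `z` and `r`, because `‖z - s (r t)‖ ≥ |‖z - q‖ - r t|`. -/
theorem IsRadSection.log_bounds {q : ℂ} {s : ℝ → ℂ} (hs : IsRadSection q s) {r t : ℝ}
    (hr : 0 < r) (ht : t ∈ Set.Icc (1:ℝ) 2) {z : ℂ} (hne : ‖z - q‖ / r ≠ t) :
    Real.log ‖z - s (r * t)‖ ≤ Real.log (‖z - q‖ + 2 * r) ∧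
    Real.log (‖z - q‖ + 2 * r) - 8 * (√|‖z - q‖ / r - t|)⁻¹ ≤ Real.log ‖z - s (r * t)‖ := by
  obtain ⟨h1, h2⟩ := hs.pos_and_inv_sqrt_le hr ht hne
  obtain ⟨h3, h4, -⟩ := hs.norm_bounds hr ht z
  refine ⟨Real.log_le_log h1 h3, ?_⟩
  set a := ‖z - s (r * t)‖
  have h5 : Real.log (‖z - q‖ + 2 * r) ≤ Real.log (a + 4 * r) :=
    Real.log_le_log (by positivity) (by linarith)
  have h6 := (le_abs_self _).trans
    (abs_log_sub_log_le_sqrt (show 0 < a + 4 * r by positivity) h1)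
  have h7 : √|a + 4 * r - a| = 2 * √r := by
    rw [add_sub_cancel_left, abs_of_pos (by positivity), Real.sqrt_mul (by norm_num),
      show (4:ℝ) = 2 ^ 2 by norm_num, Real.sqrt_sq (by norm_num)]
  have h8 : (√(a + 4 * r))⁻¹ ≤ (√a)⁻¹ :=
    inv_anti₀ (Real.sqrt_pos.2 h1) (Real.sqrt_le_sqrt (by linarith))
  rw [h7] at h6
  have hr' := Real.sqrt_pos.2 hr
  have h9 : √r * (√a)⁻¹ ≤ (√|‖z - q‖ / r - t|)⁻¹ := by
    calc √r * (√a)⁻¹ ≤ √r * ((√r)⁻¹ * (√|‖z - q‖ / r - t|)⁻¹) := by gcongr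
      _ = _ := by field_simp
  nlinarith

theorem IsRadSection.integrableOn {q : ℂ} {s : ℝ → ℂ} (hs : IsRadSection q s) {r : ℝ}
    (hr : 0 < r) (z : ℂ) :
    IntegrableOn (fun t => Real.log ‖z - s (r * t)‖) (Set.Icc 1 2) := by
  obtain ⟨K, hK⟩ := exists_integral_inv_sqrt_le
  have hm := hs.1
  have hd : IntegrableOn (fun t => 8 * (√|‖z - q‖ / r - t|)⁻¹ +
      |Real.log (‖z - q‖ + 2 * r)|) (Set.Icc 1 2) :=
    ((hK (‖z - q‖ / r)).1.const_mul 8).add (by simp)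
  refine hd.mono' (by fun_prop : Measurable _).aestronglyMeasurable ?_
  filter_upwards [ae_ne_Icc (‖z - q‖ / r)] with t ht
  obtain ⟨h1, h2⟩ := hs.log_bounds hr ht.1 ht.2
  have h3 : 0 ≤ (√|‖z - q‖ / r - t|)⁻¹ := by positivity
  rw [Real.norm_eq_abs, abs_le]
  have h4 := neg_abs_le (Real.log (‖z - q‖ + 2 * r))
  have h5 := le_abs_self (Real.log (‖z - q‖ + 2 * r))
  constructor <;> linarith

theorem exists_logPot_bounds : ∃ C : ℝ, 0 ≤ C ∧ ∀ (q : ℂ) (s : ℝ → ℂ), IsRadSection q s →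
    ∀ r, 0 < r → ∀ z, logPot s r z ≤ Real.log (‖z - q‖ + 2 * r) ∧
      Real.log (‖z - q‖ + 2 * r) - C ≤ logPot s r z := by
  obtain ⟨K, hK⟩ := exists_integral_inv_sqrt_le
  have hK0 : 0 ≤ K := le_trans (integral_nonneg fun t => by positivity) (hK 0).2
  refine ⟨8 * K, by positivity, fun q s hs r hr z => ?_⟩
  have hi := hs.integrableOn hr z
  have hc : ∀ c : ℝ, ∫ t in Set.Icc (1:ℝ) 2, c = c := by intro c; norm_num
  have hci : ∀ c : ℝ, IntegrableOn (fun _ => c) (Set.Icc (1:ℝ) 2) := by intro c; simp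
  have hk := (hK (‖z - q‖ / r)).1.const_mul 8
  constructor
  · rw [← hc (Real.log (‖z - q‖ + 2 * r))]
    refine integral_mono_ae hi (hci _) ?_
    filter_upwards [ae_ne_Icc (‖z - q‖ / r)] with t ht
    exact (hs.log_bounds hr ht.1 ht.2).1
  · have h1 : ∫ t in Set.Icc (1:ℝ) 2, (Real.log (‖z - q‖ + 2 * r) -
        8 * (√|‖z - q‖ / r - t|)⁻¹) ≤ logPot s r z := by
      refine integral_mono_ae ((hci _).sub hk) hi ?_
      filter_upwards [ae_ne_Icc (‖z - q‖ / r)] with t ht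
      exact (hs.log_bounds hr ht.1 ht.2).2
    rw [integral_sub (hci _) hk, hc, integral_const_mul] at h1
    linarith [(hK (‖z - q‖ / r)).2]

/-- Scale-invariant Hölder continuity of the averaged potentials. It yields their continuity, and
also that they become constant in the limit of large radius. -/
theorem exists_logPot_holder : ∃ C : ℝ, 0 ≤ C ∧ ∀ (q : ℂ) (s : ℝ → ℂ), IsRadSection q s →
    ∀ r, 0 < r → ∀ z z', |logPot s r z - logPot s r z'| ≤ C * √(‖z - z'‖ / r) := by
  obtain ⟨K, hK⟩ := exists_integral_inv_sqrt_le
  have hK0 : 0 ≤ K := le_trans (integral_nonneg fun t => by positivity) (hK 0).2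
  refine ⟨4 * K, by positivity, fun q s hs r hr z z' => ?_⟩
  have hi := hs.integrableOn hr z
  have hi' := hs.integrableOn hr z'
  have hk := (hK (‖z - q‖ / r))
  have hk' := (hK (‖z' - q‖ / r))
  rw [logPot, logPot, ← integral_sub hi hi', ← Real.norm_eq_abs]
  have h1 : ‖∫ t in Set.Icc (1:ℝ) 2, (Real.log ‖z - s (r * t)‖ - Real.log ‖z' - s (r * t)‖)‖ ≤
      ∫ t in Set.Icc (1:ℝ) 2, 2 * √(‖z - z'‖ / r) *
        ((√|‖z - q‖ / r - t|)⁻¹ + (√|‖z' - q‖ / r - t|)⁻¹) := by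
    refine norm_integral_le_of_norm_le ((hk.1.add hk'.1).const_mul _) ?_
    filter_upwards [ae_ne_Icc (‖z - q‖ / r), ae_ne_Icc (‖z' - q‖ / r)] with t ht ht'
    obtain ⟨h1, h2⟩ := hs.pos_and_inv_sqrt_le hr ht.1 ht.2
    obtain ⟨h3, h4⟩ := hs.pos_and_inv_sqrt_le hr ht'.1 ht'.2
    have h5 := abs_log_sub_log_le_sqrt h1 h3
    have h6 : |‖z - s (r * t)‖ - ‖z' - s (r * t)‖| ≤ ‖z - z'‖ := by
      simpa using abs_norm_sub_norm_le (z - s (r * t)) (z' - s (r * t))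
    rw [Real.norm_eq_abs]
    calc _ ≤ _ := h5
      _ ≤ 2 * √‖z - z'‖ * ((√r)⁻¹ * (√|‖z - q‖ / r - t|)⁻¹ +
          (√r)⁻¹ * (√|‖z' - q‖ / r - t|)⁻¹) := by gcongr
      _ = _ := by rw [Real.sqrt_div (norm_nonneg _)]; ring
  rw [integral_const_mul, integral_add hk.1 hk'.1] at h1
  have h2 : 0 ≤ √(‖z - z'‖ / r) := Real.sqrt_nonneg _
  nlinarith [hk.2, hk'.2]

theorem IsRadSection.continuous_logPot {q : ℂ} {s : ℝ → ℂ} (hs : IsRadSection q s) {r : ℝ}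
    (hr : 0 < r) : Continuous (logPot s r) := by
  obtain ⟨C, -, hC⟩ := exists_logPot_holder
  rw [continuous_iff_continuousAt]
  intro z
  rw [ContinuousAt, tendsto_iff_norm_sub_tendsto_zero]
  refine squeeze_zero (fun _ => norm_nonneg _) (fun x => hC q s hs r hr x z) ?_
  have : Continuous fun x => C * √(‖x - z‖ / r) := by fun_prop
  simpa using this.tendsto z

/-- As the radius tends to infinity, the averaged potential loses its dependence on the point. -/
theorem IsRadSection.tendsto_logPot_sub {q : ℂ} {s : ℝ → ℂ} (hs : IsRadSection q s) (z z' : ℂ)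
    {r : ℕ → ℝ} (hr : ∀ n, 0 < r n) (hr' : Tendsto r atTop atTop) :
    Tendsto (fun n => logPot s (r n) z - logPot s (r n) z') atTop (𝓝 0) := by
  obtain ⟨C, -, hC⟩ := exists_logPot_holder
  refine squeeze_zero_norm (fun n => hC q s hs (r n) (hr n) z z') ?_
  have h1 : Tendsto (fun n => ‖z - z'‖ / r n) atTop (𝓝 0) := hr'.const_div_atTop _
  have h2 := ((Real.continuous_sqrt.tendsto 0).comp h1).const_mul C
  simpa using h2

theorem IsRadSection.tendsto_logPot_zero {q : ℂ} {s : ℝ → ℂ} (hs : IsRadSection q s) {z : ℂ}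
    (hz : z ≠ q) {r : ℕ → ℝ} (hr : ∀ n, 0 < r n) (hr' : Tendsto r atTop (𝓝 0)) :
    Tendsto (fun n => logPot s (r n) z) atTop (𝓝 (Real.log ‖z - q‖)) := by
  have hρ : 0 < ‖z - q‖ := norm_pos_iff.2 (sub_ne_zero.2 hz)
  have hl : ∀ k : ℝ, Tendsto (fun n => Real.log (‖z - q‖ + k * r n)) atTop
      (𝓝 (Real.log ‖z - q‖)) := by
    intro k
    have h1 : Tendsto (fun n => ‖z - q‖ + k * r n) atTop (𝓝 (‖z - q‖ + k * 0)) :=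
      (hr'.const_mul k).const_add _
    rw [mul_zero, add_zero] at h1
    exact h1.log hρ.ne'
  refine tendsto_of_tendsto_of_tendsto_of_le_of_le' (hl (-2)) (hl 2) ?_ ?_
  · have h1 : ∀ᶠ n in atTop, r n < ‖z - q‖ / 2 := hr'.eventually_lt_const (by positivity)
    filter_upwards [h1] with n hn
    have hc : ∀ c : ℝ, ∫ t in Set.Icc (1:ℝ) 2, c = c := by intro c; norm_num
    rw [logPot, ← hc (Real.log _)]
    refine setIntegral_mono_on (by simp) (hs.integrableOn (hr n) z) measurableSet_Icc ?_
    intro t ht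
    have := hs.norm_bounds (hr n) ht z
    exact Real.log_le_log (by linarith) (by linarith)
  · obtain ⟨C, -, hC⟩ := exists_logPot_bounds
    exact Eventually.of_forall fun n => (hC q s hs (r n) (hr n) z).1

/-! ### Radial sections in the complement of a simply connected domain -/

/-- A simply connected domain omitting `q` contains no circle about `q`: a branch of `log (z - q)`
along the circle would differ from `i θ` by a constant, by uniqueness of lifts through `exp`,
contradicting periodicity. -/
theorem exists_circleMap_notMem {Ω : Set ℂ} (hopen : IsOpen Ω) (hsc : SimplyConnectedSpace Ω)
    {q : ℂ} (hq : q ∉ Ω) (t : ℝ) : ∃ θ ∈ Set.Icc 0 (2 * Real.pi), circleMap q t θ ∉ Ω := by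
  by_contra! hcon
  have hpi := Real.pi_pos
  have ht : t ≠ 0 := by
    rintro rfl
    exact hq (by simpa using hcon 0 ⟨le_rfl, by positivity⟩)
  have hall : ∀ θ, circleMap q t θ ∈ Ω := by
    intro θ
    obtain ⟨y, hy, hy'⟩ := (periodic_circleMap q t).exists_mem_Ico₀ Real.two_pi_pos θ
    rw [hy']
    exact hcon y (Set.Ico_subset_Icc_self hy)
  obtain ⟨f, hf, hfe⟩ := Complex.exists_continuousOn_eqOn_exp_comp (U := Ω)
    (g := fun z => z - q) hsc hopen (by fun_prop) (by
      rintro ⟨z, hz, hz0⟩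
      rw [sub_eq_zero] at hz0
      exact hq (hz0 ▸ hz))
  have hfe' : ∀ θ : ℝ, Complex.exp (f (circleMap q t θ) - θ * Complex.I) = t := by
    intro θ
    have := hfe (hall θ)
    simp only [Function.comp_apply] at this
    rw [Complex.exp_sub, this]
    simp [circleMap]
  have hcont : Continuous fun θ : ℝ => f (circleMap q t θ) - θ * Complex.I := by
    have : Continuous fun θ : ℝ => f (circleMap q t θ) :=
      hf.comp_continuous (continuous_circleMap q t) hall
    exact this.sub (Complex.continuous_ofReal.mul continuous_const)
  have heq := Complex.isCoveringMap_exp.eq_of_comp_eq hcont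
    (continuous_const (y := f (circleMap q t 0) - (0:ℝ) * Complex.I))
    (by ext θ; simp only [Function.comp_apply]; rw [hfe', hfe']) 0 rfl
  have h2 := congrFun heq (2 * Real.pi)
  have h3 : circleMap q t (2 * Real.pi) = circleMap q t 0 := by
    simpa using periodic_circleMap q t 0
  simp [h3] at h2

/-- On the circle of radius `t` about `q`, the point outside `Ω` of least angle in `[0, 2 π]` depends
measurably on `t`, since the sublevel sets of the angle are projections of closed sets along a
compact factor. -/
theorem exists_isRadSection {Ω : Set ℂ} (hopen : IsOpen Ω) (hsc : SimplyConnectedSpace Ω)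
    {q : ℂ} (hq : q ∉ Ω) : ∃ s : ℝ → ℂ, IsRadSection q s ∧ ∀ t, s t ∉ Ω := by
  set S : ℝ → Set ℝ := fun t => {θ | θ ∈ Set.Icc 0 (2 * Real.pi) ∧ circleMap q t θ ∉ Ω} with hS
  have hcl : ∀ t, IsCompact (S t) := fun t =>
    isCompact_Icc.inter_right (hopen.isClosed_compl.preimage (continuous_circleMap q t))
  have hne : ∀ t, (S t).Nonempty := fun t => exists_circleMap_notMem hopen hsc hq t
  have hmem : ∀ t, sInf (S t) ∈ S t := fun t => (hcl t).sInf_mem (hne t)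
  have hmeas : Measurable fun t => sInf (S t) := by
    refine measurable_of_Iic fun c => ?_
    -- the sublevel set is the projection of a closed subset of `[0, 2 π] × ℝ`
    have : (fun t => sInf (S t)) ⁻¹' Set.Iic c =
        Prod.snd '' {p : Set.Icc (0:ℝ) (2 * Real.pi) × ℝ | circleMap q p.2 p.1 ∉ Ω ∧ (p.1 : ℝ) ≤ c} := by
      ext t
      constructor
      · intro h
        exact ⟨(⟨_, (hmem t).1⟩, t), ⟨(hmem t).2, h⟩, rfl⟩
      · rintro ⟨⟨θ, t'⟩, ⟨h1, h2⟩, rfl⟩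
        exact (csInf_le (hcl _).bddBelow ⟨θ.2, h1⟩).trans h2
    rw [this]
    refine (isClosedMap_snd_of_compactSpace _ ?_).measurableSet
    have hle : IsClosed {p : Set.Icc (0:ℝ) (2 * Real.pi) × ℝ | (p.1 : ℝ) ≤ c} :=
      isClosed_le (by fun_prop) (by fun_prop)
    refine IsClosed.inter (hopen.isClosed_compl.preimage ?_) hle
    unfold circleMap
    fun_prop
  refine ⟨fun t => circleMap q t (sInf (S t)), ⟨?_, ?_⟩, fun t => (hmem t).2⟩
  · unfold circleMap
    fun_prop
  · intro t ht
    simp [circleMap, abs_of_nonneg ht]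

/-! ### The harmonic measure reproduces logarithms with pole off the domain -/

/-- Fatou's lemma for real-valued functions converging almost everywhere. -/
theorem integrable_and_integral_le_of_tendsto {α : Type*} [MeasurableSpace α] {μ : Measure α}
    {f : ℕ → α → ℝ} {g : α → ℝ} {c : ℕ → ℝ} {c₀ : ℝ}
    (hf : ∀ n, Integrable (f n) μ) (hf0 : ∀ n, 0 ≤ᵐ[μ] f n)
    (hlim : ∀ᵐ x ∂μ, Tendsto (fun n => f n x) atTop (𝓝 (g x)))
    (hc : ∀ n, ∫ x, f n x ∂μ ≤ c n) (hc' : Tendsto c atTop (𝓝 c₀)) :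
    Integrable g μ ∧ ∫ x, g x ∂μ ≤ c₀ := by
  have hg : AEStronglyMeasurable g μ :=
    aestronglyMeasurable_of_tendsto_ae _ (fun n => (hf n).1) hlim
  have hg0 : 0 ≤ᵐ[μ] g := by
    filter_upwards [hlim, ae_all_iff.2 hf0] with x hx h0
    exact ge_of_tendsto' hx h0
  have hc0 : 0 ≤ c₀ := ge_of_tendsto' hc' fun n => (integral_nonneg_of_ae (hf0 n)).trans (hc n)
  have h1 : ∫⁻ x, ENNReal.ofReal (g x) ∂μ ≤ ENNReal.ofReal c₀ := by
    calc ∫⁻ x, ENNReal.ofReal (g x) ∂μ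
        = ∫⁻ x, liminf (fun n => ENNReal.ofReal (f n x)) atTop ∂μ := by
          refine lintegral_congr_ae ?_
          filter_upwards [hlim] with x hx
          exact (ENNReal.tendsto_ofReal hx).liminf_eq.symm
      _ ≤ liminf (fun n => ∫⁻ x, ENNReal.ofReal (f n x) ∂μ) atTop :=
          lintegral_liminf_le' fun n => (hf n).1.aemeasurable.ennreal_ofReal
      _ ≤ liminf (fun n => ENNReal.ofReal (c n)) atTop := by
          refine liminf_le_liminf (Eventually.of_forall fun n => ?_)
          rw [← ofReal_integral_eq_lintegral_ofReal (hf n) (hf0 n)]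
          exact ENNReal.ofReal_le_ofReal (hc n)
      _ = ENNReal.ofReal c₀ := (ENNReal.tendsto_ofReal hc').liminf_eq
  refine ⟨⟨hg, ?_⟩, ?_⟩
  · rw [hasFiniteIntegral_iff_ofReal hg0]
    exact h1.trans_lt ENNReal.ofReal_lt_top
  · rw [integral_eq_lintegral_of_nonneg_ae hg0 hg]
    exact ENNReal.toReal_le_of_le_ofReal hc0 h1

theorem exists_separation {Ω : Set ℂ} (hopen : IsOpen Ω) {z : ℂ} {R : ℝ} (hR : 0 < R)
    (hz : closedBall z R ⊆ Ω) : ∃ δ, 0 < δ ∧ ∀ x, x ∉ Ω → R + δ ≤ ‖z - x‖ := by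
  obtain ⟨δ, hδ, h⟩ := (isCompact_closedBall z R).exists_cthickening_subset_open hopen hz
  refine ⟨δ, hδ, fun x hx => ?_⟩
  rw [cthickening_closedBall hδ.le hR.le] at h
  by_contra! hlt
  refine hx (h ?_)
  rw [mem_closedBall, dist_comm, dist_eq_norm]
  linarith

theorem IsRadSection.hasMVP {Ω : Set ℂ} (hopen : IsOpen Ω) {q : ℂ} {s : ℝ → ℂ}
    (hs : IsRadSection q s) (hsΩ : ∀ t, s t ∉ Ω) {r r' : ℝ} (hr : 0 < r) (hr' : 0 < r') :
    HasMVP (fun z => logPot s r z - logPot s r' z) Ω := by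
  intro z hz R hR hball
  obtain ⟨δ, hδ, hsep⟩ := exists_separation hopen hR hball
  have hm := hs.1
  have h1 := fun (ρ : ℝ) (hρ : 0 < ρ) =>
    setIntegral_ball_logPotential (τ := volume.restrict (Set.Icc (1:ℝ) 2)) (s := fun t => s (ρ * t))
      (by fun_prop) hR hδ (ae_of_all _ fun t => hsep _ (hsΩ _)) (hs.integrableOn hρ z)
  refine (setAverage_ball_eq hR ?_).symm
  have h2 := integral_sub (h1 r hr).1 (h1 r' hr').1
  refine h2.trans ?_
  rw [(h1 r hr).2, (h1 r' hr').2]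
  simp only [logPot]
  ring

theorem abs_log_add_sub_log_add_le {ρ a b : ℝ} (hρ : 0 ≤ ρ) (ha : 0 < a) (hb : 0 < b) :
    |Real.log (ρ + a) - Real.log (ρ + b)| ≤ Real.log (1 + a / b + b / a) := by
  have h1 : a / b * b = a := by field_simp
  have h2 : b / a * a = b := by field_simp
  have h3 : 0 < a / b := by positivity
  have h4 : 0 < b / a := by positivity
  refine abs_log_sub_log_le (by positivity) (by positivity) ?_ ?_ <;> nlinarith [mul_pos h4 hb, mul_pos h3 ha, mul_nonneg h3.le hρ, mul_nonneg h4.le hρ]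

/-- The difference of two averaged potentials is bounded and continuous, so it is a legitimate test
function for the harmonic measure. -/
theorem IsHarmonicMeasure.integral_logPot_sub {Ω : Set ℂ} (hopen : IsOpen Ω) {w : ℂ}
    {μ : Measure ℂ} (hμ : IsHarmonicMeasure Ω w μ) {q : ℂ} {s : ℝ → ℂ}
    (hs : IsRadSection q s) (hsΩ : ∀ t, s t ∉ Ω) {r r' : ℝ} (hr : 0 < r) (hr' : 0 < r') :
    Integrable (fun z => logPot s r z - logPot s r' z) μ ∧
    ∫ z, (logPot s r z - logPot s r' z) ∂μ = logPot s r w - logPot s r' w := by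
  have := hμ.1
  obtain ⟨C, hC0, hC⟩ := exists_logPot_bounds
  have hcont : Continuous fun z => logPot s r z - logPot s r' z :=
    (hs.continuous_logPot hr).sub (hs.continuous_logPot hr')
  have hb : ∃ M, ∀ x, |logPot s r x - logPot s r' x| ≤ M := by
    refine ⟨Real.log (1 + (2 * r) / (2 * r') + (2 * r') / (2 * r)) + C, fun x => ?_⟩
    have h1 := hC q s hs r hr x
    have h2 := hC q s hs r' hr' x
    have h3 := abs_log_add_sub_log_add_le (norm_nonneg (x - q)) (show 0 < 2 * r by positivity)
      (show 0 < 2 * r' by positivity)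
    rw [abs_le] at h3 ⊢
    constructor <;> linarith [h3.1, h3.2, h1.1, h1.2, h2.1, h2.2]
  refine ⟨?_, (hμ.2.2 _ hcont.continuousOn hb (hs.hasMVP hopen hsΩ hr hr')).symm⟩
  obtain ⟨M, hM⟩ := hb
  exact Integrable.of_bound hcont.aestronglyMeasurable M (ae_of_all _ hM)

/-- The harmonic measure has a finite logarithmic moment and reproduces the (unbounded) averaged
potentials, as the limit of `integral_logPot_sub` when one radius tends to infinity. -/
theorem IsHarmonicMeasure.integral_logPot {Ω : Set ℂ} (hopen : IsOpen Ω) {w : ℂ}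
    {μ : Measure ℂ} (hμ : IsHarmonicMeasure Ω w μ) {q : ℂ} {s : ℝ → ℂ}
    (hs : IsRadSection q s) (hsΩ : ∀ t, s t ∉ Ω) :
    (∀ c, 0 < c → Integrable (fun z => Real.log (‖z - q‖ + c)) μ) ∧
    ∀ r, 0 < r → Integrable (logPot s r) μ ∧ ∫ z, logPot s r z ∂μ = logPot s r w := by
  have := hμ.1
  obtain ⟨C, hC0, hC⟩ := exists_logPot_bounds
  have hC' := hC q s hs
  set R : ℕ → ℝ := fun n => n + 1 with hR
  have hR0 : ∀ n, 0 < R n := fun n => by positivity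
  have hR1 : ∀ n, 1 ≤ R n := fun n => by simp [hR]
  have hRt : Tendsto R atTop atTop :=
    tendsto_atTop_add_const_right _ _ tendsto_natCast_atTop_atTop
  have hpt := fun z => hs.tendsto_logPot_sub z w hR0 hRt
  have hlog : ∀ n (z : ℂ), Real.log (‖z - q‖ + 2 * R n) ≤
      Real.log (‖z - q‖ + 2) + Real.log (2 * R n) := by
    intro n z
    have := hR1 n
    rw [← Real.log_mul (by positivity) (by positivity)]
    exact Real.log_le_log (by positivity) (by nlinarith [norm_nonneg (z - q)])
  have hlog' : ∀ n (z : ℂ), Real.log (2 * R n) ≤ Real.log (‖z - q‖ + 2 * R n) := by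
    intro n z
    have := hR0 n
    exact Real.log_le_log (by positivity) (by linarith [norm_nonneg (z - q)])
  have hup : ∀ n z, logPot s (R n) z - logPot s (R n) w ≤ Real.log (‖z - q‖ + 2) + C := by
    intro n z
    linarith [(hC' _ (hR0 n) z).1, (hC' _ (hR0 n) w).2, hlog n z, hlog' n w]
  have hlow : ∀ n z, -(Real.log (‖w - q‖ + 2) + C) ≤ logPot s (R n) z - logPot s (R n) w := by
    intro n z
    linarith [(hC' _ (hR0 n) z).2, (hC' _ (hR0 n) w).1, hlog n w, hlog' n z]
  have h1 := fun n => hμ.integral_logPot_sub hopen hs hsΩ one_pos (hR0 n)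
  -- the constant that makes the functions `logPot s 1 - logPot s (R n) + const` nonnegative
  set B := 2 * C + logPot s 1 w with hB
  have hI1 : Integrable (logPot s 1) μ := by
    have := (integrable_and_integral_le_of_tendsto (μ := μ)
      (f := fun n z => (logPot s 1 z - logPot s (R n) z) + (logPot s (R n) w - logPot s 1 w + B))
      (g := fun z => logPot s 1 z - logPot s 1 w + B) (c := fun _ => B) (c₀ := B)
      (fun n => (h1 n).1.add (integrable_const _)) ?_ ?_ ?_ tendsto_const_nhds).1
    · have h2 := this.add (integrable_const (logPot s 1 w - B))
      refine h2.congr (ae_of_all _ fun z => ?_)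
      simp only [Pi.add_apply]; ring
    · refine fun n => ae_of_all _ fun z => ?_
      have := (hC' 1 one_pos z).2
      rw [mul_one] at this
      simp only [Pi.zero_apply]
      linarith [hup n z]
    · refine ae_of_all _ fun z => ?_
      have := (hpt z).const_sub (logPot s 1 z - logPot s 1 w + B)
      rw [sub_zero] at this
      refine this.congr fun n => ?_
      ring
    · intro n
      rw [integral_add (h1 n).1 (integrable_const _), (h1 n).2]
      simp only [integral_const, probReal_univ, one_smul]
      linarith
  have hlog2 : Integrable (fun z => Real.log (‖z - q‖ + 2)) μ := by
    refine (hI1.abs.add (integrable_const C)).mono'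
      (by fun_prop : Measurable _).aestronglyMeasurable (ae_of_all _ fun z => ?_)
    have := hC' 1 one_pos z
    rw [mul_one] at this
    have h3 := neg_abs_le (logPot s 1 z)
    have h4 := le_abs_self (logPot s 1 z)
    rw [Real.norm_eq_abs, abs_le]
    simp only [Pi.add_apply]
    constructor <;> linarith [this.1, this.2]
  have hI1' : ∫ z, logPot s 1 z ∂μ = logPot s 1 w := by
    have h2 : Tendsto (fun n => ∫ z, (logPot s (R n) z - logPot s (R n) w) ∂μ) atTop
        (𝓝 (∫ _, 0 ∂μ)) := by
      refine tendsto_integral_of_dominated_convergence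
        (fun z => Real.log (‖z - q‖ + 2) + (Real.log (‖w - q‖ + 2) + C)) (fun n => ?_)
        (hlog2.add (integrable_const _)) (fun n => ae_of_all _ fun z => ?_)
        (ae_of_all _ hpt)
      · exact ((hs.continuous_logPot (hR0 n)).sub continuous_const).aestronglyMeasurable
      · have h3 : 0 ≤ Real.log (‖w - q‖ + 2) :=
          Real.log_nonneg (by linarith [norm_nonneg (w - q)])
        have h4 : 0 ≤ Real.log (‖z - q‖ + 2) :=
          Real.log_nonneg (by linarith [norm_nonneg (z - q)])
        rw [Real.norm_eq_abs, abs_le]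
        constructor <;> linarith [hup n z, hlow n z]
    have h3 : ∀ n, ∫ z, (logPot s (R n) z - logPot s (R n) w) ∂μ
        = ∫ z, logPot s 1 z ∂μ - logPot s 1 w := by
      intro n
      have h4 : ∀ z, logPot s (R n) z - logPot s (R n) w =
          logPot s 1 z - (logPot s 1 z - logPot s (R n) z) - logPot s (R n) w := by
        intro z; ring
      simp only [h4]
      have hi : Integrable (fun z => logPot s 1 z - (logPot s 1 z - logPot s (R n) z)) μ :=
        hI1.sub (h1 n).1
      rw [integral_sub hi (integrable_const _), integral_sub hI1 (h1 n).1, (h1 n).2]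
      simp only [integral_const, probReal_univ, one_smul]
      ring
    simp only [h3, integral_zero] at h2
    have := tendsto_nhds_unique tendsto_const_nhds h2
    linarith
  refine ⟨fun c hc => ?_, fun r hr => ?_⟩
  · refine (hlog2.abs.add (integrable_const (Real.log (1 + c / 2 + 2 / c)))).mono'
      (by fun_prop : Measurable _).aestronglyMeasurable (ae_of_all _ fun z => ?_)
    have h3 := abs_log_add_sub_log_add_le (norm_nonneg (z - q)) hc two_pos
    have h4 := abs_sub_abs_le_abs_sub (Real.log (‖z - q‖ + c)) (Real.log (‖z - q‖ + 2))
    rw [Real.norm_eq_abs]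
    simp only [Pi.add_apply]
    linarith
  · have h2 := hμ.integral_logPot_sub hopen hs hsΩ hr one_pos
    have h3 : ∀ z, logPot s r z = (logPot s r z - logPot s 1 z) + logPot s 1 z := by
      intro z; ring
    refine ⟨(h2.1.add hI1).congr (ae_of_all _ fun z => (h3 z).symm), ?_⟩
    rw [integral_congr_ae (ae_of_all _ h3), integral_add h2.1 hI1, h2.2, hI1']
    ring

/-- The harmonic measure reproduces `log ‖· - q‖` for `q ∉ Ω`, and does not charge `q`, as the limit
of `integral_logPot` when the radius tends to zero. -/
theorem IsHarmonicMeasure.log_norm_sub {Ω : Set ℂ} (hopen : IsOpen Ω)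
    (hsc : SimplyConnectedSpace Ω) {w : ℂ} (hw : w ∈ Ω)
    {μ : Measure ℂ} (hμ : IsHarmonicMeasure Ω w μ) {q : ℂ} (hq : q ∉ Ω) :
    (∀ c, 0 < c → Integrable (fun z => Real.log (‖z - q‖ + c)) μ) ∧
    μ {q} = 0 ∧ Integrable (fun z => Real.log ‖z - q‖) μ ∧
    ∫ z, Real.log ‖z - q‖ ∂μ = Real.log ‖w - q‖ := by
  have := hμ.1
  obtain ⟨s, hs, hsΩ⟩ := exists_isRadSection hopen hsc hq
  obtain ⟨hlog, hV⟩ := hμ.integral_logPot hopen hs hsΩ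
  have hwq : w ≠ q := fun h => hq (h ▸ hw)
  have hwq' : 0 < ‖w - q‖ := norm_pos_iff.2 (sub_ne_zero.2 hwq)
  obtain ⟨C, hC0, hC⟩ := exists_logPot_bounds
  have hC' := hC q s hs
  have hlog2 := hlog 2 two_pos
  set r : ℕ → ℝ := fun n => 1 / ((n : ℝ) + 1) with hr
  have hr0 : ∀ n, 0 < r n := fun n => by positivity
  have hr1 : ∀ n, r n ≤ 1 := fun n => by
    rw [hr]; exact div_le_one_of_le₀ (by simp) (by positivity)
  have hrt : Tendsto r atTop (𝓝 0) := tendsto_one_div_add_atTop_nhds_zero_nat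
  set I := ∫ z, Real.log (‖z - q‖ + 2) ∂μ
  have hle : ∀ n z, logPot s (r n) z ≤ Real.log (‖z - q‖ + 2) := fun n z =>
    (hC' _ (hr0 n) z).1.trans (Real.log_le_log (by have := hr0 n; positivity)
      (by linarith [hr1 n]))
  have hint : ∀ n, ∫ z, (Real.log (‖z - q‖ + 2) - logPot s (r n) z) ∂μ
      = I - logPot s (r n) w := fun n => by
    rw [integral_sub hlog2 (hV _ (hr0 n)).1, (hV _ (hr0 n)).2]
  -- an atom at `q` would make the integral of `logPot s r` tend to `-∞` as `r → 0`
  have hq0 : μ {q} = 0 := by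
    have h1 : ∀ n : ℕ, μ.real {q} * Real.log (n + 1) ≤ I - Real.log ‖w - q‖ + C := by
      intro n
      have hi := hlog2.sub (hV _ (hr0 n)).1
      have h2 : ∫ z in {q}, (Real.log (‖z - q‖ + 2) - logPot s (r n) z) ∂μ ≤
          I - logPot s (r n) w := by
        rw [← hint n]
        exact setIntegral_le_integral hi (ae_of_all _ fun z => sub_nonneg.2 (hle n z))
      rw [integral_singleton, smul_eq_mul] at h2
      have h3 := (hC' _ (hr0 n) q).1
      rw [sub_self, norm_zero, zero_add, Real.log_mul (by norm_num) (hr0 n).ne'] at h3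
      rw [sub_self, norm_zero, zero_add] at h2
      have h4 : Real.log (r n) = - Real.log (n + 1) := by
        rw [hr]; simp
      have h5 : μ.real {q} * Real.log (n + 1) ≤
          μ.real {q} * (Real.log 2 - logPot s (r n) q) :=
        mul_le_mul_of_nonneg_left (by linarith) measureReal_nonneg
      have h6 := (hC' _ (hr0 n) w).2
      have h7 : Real.log ‖w - q‖ ≤ Real.log (‖w - q‖ + 2 * r n) :=
        Real.log_le_log hwq' (by linarith [hr0 n])
      linarith
    have h2 : Tendsto (fun n : ℕ => Real.log ((n : ℝ) + 1)) atTop atTop :=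
      Real.tendsto_log_atTop.comp
        (tendsto_atTop_add_const_right _ _ tendsto_natCast_atTop_atTop)
    by_contra hne
    have h3 : 0 < μ.real {q} := ENNReal.toReal_pos hne (measure_ne_top _ _)
    obtain ⟨n, hn⟩ := ((h2.const_mul_atTop h3).eventually_gt_atTop
      (I - Real.log ‖w - q‖ + C)).exists
    linarith [h1 n]
  have hne : ∀ᵐ z ∂μ, z ≠ q := by
    rw [ae_iff]; simpa using hq0
  have hlim : ∀ᵐ z ∂μ, Tendsto (fun n => logPot s (r n) z) atTop (𝓝 (Real.log ‖z - q‖)) := by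
    filter_upwards [hne] with z hz using hs.tendsto_logPot_zero hz hr0 hrt
  have hlimw := hs.tendsto_logPot_zero hwq hr0 hrt
  have hI : Integrable (fun z => Real.log ‖z - q‖) μ := by
    have := (integrable_and_integral_le_of_tendsto (μ := μ)
      (f := fun n z => Real.log (‖z - q‖ + 2) - logPot s (r n) z)
      (g := fun z => Real.log (‖z - q‖ + 2) - Real.log ‖z - q‖)
      (fun n => hlog2.sub (hV _ (hr0 n)).1)
      (fun n => ae_of_all _ fun z => sub_nonneg.2 (hle n z))
      (by filter_upwards [hlim] with z hz using hz.const_sub _)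
      (fun n => (hint n).le) (hlimw.const_sub I)).1
    refine (hlog2.sub this).congr (ae_of_all _ fun z => ?_)
    simp only [Pi.sub_apply]; ring
  refine ⟨hlog, hq0, hI, ?_⟩
  have h1 : Tendsto (fun n => ∫ z, logPot s (r n) z ∂μ) atTop
      (𝓝 (∫ z, Real.log ‖z - q‖ ∂μ)) := by
    refine tendsto_integral_of_dominated_convergence
      (fun z => |Real.log (‖z - q‖ + 2)| + |Real.log ‖z - q‖| + C)
      (fun n => (hV _ (hr0 n)).1.1) ((hlog2.abs.add hI.abs).add (integrable_const C))
      (fun n => ?_) hlim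
    filter_upwards [hne] with z hz
    have hz' : 0 < ‖z - q‖ := norm_pos_iff.2 (sub_ne_zero.2 hz)
    have h6 := (hC' _ (hr0 n) z).2
    have h7 : Real.log ‖z - q‖ ≤ Real.log (‖z - q‖ + 2 * r n) :=
      Real.log_le_log hz' (by linarith [hr0 n])
    rw [Real.norm_eq_abs, abs_le]
    constructor <;> linarith [hle n z, neg_abs_le (Real.log ‖z - q‖),
      le_abs_self (Real.log (‖z - q‖ + 2)), abs_nonneg (Real.log ‖z - q‖),
      abs_nonneg (Real.log (‖z - q‖ + 2))]
  have h2 : (fun n => ∫ z, logPot s (r n) z ∂μ) = fun n => logPot s (r n) w :=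
    funext fun n => (hV _ (hr0 n)).2
  rw [h2] at h1
  exact tendsto_nhds_unique h1 hlimw

/-! ### The Green potential -/

/-- The logarithmic potential of `μ - δ_w`. For the harmonic measure `μ` of `Ω` at `w` it is the
Green function of `Ω` with pole at `w`. -/
def greenPot (μ : Measure ℂ) (w q : ℂ) : ℝ :=
  ∫ ζ, Real.log ‖q - ζ‖ ∂μ - Real.log ‖q - w‖

theorem IsHarmonicMeasure.ae_notMem {Ω : Set ℂ} (hopen : IsOpen Ω) {w : ℂ} {μ : Measure ℂ}
    (hμ : IsHarmonicMeasure Ω w μ) : ∀ᵐ ζ ∂μ, ζ ∉ Ω := by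
  rw [ae_iff]
  refine measure_mono_null (fun ζ hζ => ?_) hμ.2.1
  rw [hopen.frontier_eq]
  exact fun h => hζ h.2

theorem IsHarmonicMeasure.integrable_log {Ω : Set ℂ} (hopen : IsOpen Ω)
    (hsc : SimplyConnectedSpace Ω) (hhyp : Ωᶜ.Nonempty) {w : ℂ} (hw : w ∈ Ω) {μ : Measure ℂ}
    (hμ : IsHarmonicMeasure Ω w μ) (q : ℂ) : Integrable (fun ζ => Real.log ‖q - ζ‖) μ := by
  have := hμ.1
  by_cases hq : q ∈ Ω
  · obtain ⟨e, he⟩ := hhyp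
    obtain ⟨δ, hδ, hball⟩ := Metric.isOpen_iff.1 hopen q hq
    have hqe : 0 < ‖e - q‖ := norm_pos_iff.2 (sub_ne_zero.2 fun h => he (h ▸ hq))
    have h1 := (hμ.log_norm_sub hopen hsc hw he).1 ‖e - q‖ hqe
    refine (h1.abs.add (integrable_const |Real.log δ|)).mono'
      (by fun_prop : Measurable _).aestronglyMeasurable ?_
    filter_upwards [hμ.ae_notMem hopen] with ζ hζ
    have h2 : δ ≤ ‖q - ζ‖ := by
      by_contra! h
      exact hζ (hball (by rwa [mem_ball, dist_comm, dist_eq_norm]))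
    have h3 : ‖q - ζ‖ ≤ ‖ζ - e‖ + ‖e - q‖ := by
      rw [norm_sub_rev q ζ]; simpa using norm_add_le (ζ - e) (e - q)
    have h4 := Real.log_le_log hδ h2
    have h5 := Real.log_le_log (hδ.trans_le h2) h3
    have h6 := neg_abs_le (Real.log δ)
    have h7 := le_abs_self (Real.log (‖ζ - e‖ + ‖e - q‖))
    simp only [Pi.add_apply]
    rw [Real.norm_eq_abs, abs_le]
    constructor <;> linarith [abs_nonneg (Real.log δ), abs_nonneg (Real.log (‖ζ - e‖ + ‖e - q‖))]
  · simpa only [norm_sub_rev q] using (hμ.log_norm_sub hopen hsc hw hq).2.2.1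

theorem IsHarmonicMeasure.greenPot_eq_zero {Ω : Set ℂ} (hopen : IsOpen Ω)
    (hsc : SimplyConnectedSpace Ω) {w : ℂ} (hw : w ∈ Ω) {μ : Measure ℂ}
    (hμ : IsHarmonicMeasure Ω w μ) {q : ℂ} (hq : q ∉ Ω) : greenPot μ w q = 0 := by
  simp only [greenPot, norm_sub_rev q, (hμ.log_norm_sub hopen hsc hw hq).2.2.2, sub_self]

/-- The Fatou argument behind the boundary behaviour of `greenPot`: if points `q n` have companions
`q' n` outside the domain whose normalized kernels are asymptotically the same, then `greenPot (q n)`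
cannot stay below a negative constant, as it vanishes at `q' n`. -/
theorem IsHarmonicMeasure.not_greenPot_le {Ω : Set ℂ} (hopen : IsOpen Ω)
    (hsc : SimplyConnectedSpace Ω) (hhyp : Ωᶜ.Nonempty) {w : ℂ} (hw : w ∈ Ω) {μ : Measure ℂ}
    (hμ : IsHarmonicMeasure Ω w μ) {q q' : ℕ → ℂ} {C c : ℝ} (hq' : ∀ n, q' n ∉ Ω)
    (hle : ∀ n, ∀ ζ, ζ ∉ Ω → ‖q' n - ζ‖ ≤ 5 * ‖q n - ζ‖)
    (hC : ∀ n, -C ≤ Real.log ‖q' n - w‖ - Real.log ‖q n - w‖)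
    (hlim : ∀ᵐ ζ ∂μ, Tendsto (fun n => (Real.log ‖q n - ζ‖ - Real.log ‖q n - w‖) -
      (Real.log ‖q' n - ζ‖ - Real.log ‖q' n - w‖)) atTop (𝓝 0))
    (hc : c < 0) : ¬ ∀ n, greenPot μ w (q n) ≤ c := by
  intro hcon
  have := hμ.1
  have hi := fun p => hμ.integrable_log hopen hsc hhyp hw p
  set B := Real.log 5 + C with hB
  set k : ℕ → ℝ := fun n => Real.log ‖q' n - w‖ - Real.log ‖q n - w‖ with hk
  have hne : ∀ᵐ ζ ∂μ, ∀ n, ζ ≠ q' n := by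
    rw [ae_all_iff]
    intro n
    rw [ae_iff]
    simpa using (hμ.log_norm_sub hopen hsc hw (hq' n)).2.1
  have h := (integrable_and_integral_le_of_tendsto (μ := μ)
    (f := fun n ζ => Real.log ‖q n - ζ‖ - Real.log ‖q' n - ζ‖ + (k n + B))
    (g := fun _ => B) (c := fun _ => c + B) (c₀ := c + B)
    (fun n => ((hi _).sub (hi _)).add (integrable_const _)) ?_ ?_ ?_ tendsto_const_nhds).2
  · simp only [integral_const, probReal_univ, one_smul] at h
    linarith
  · intro n
    filter_upwards [hne, hμ.ae_notMem hopen] with ζ h1 h2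
    have h3 : 0 < ‖q' n - ζ‖ := norm_pos_iff.2 (sub_ne_zero.2 (h1 n).symm)
    have h4 := hle n ζ h2
    have h5 : 0 < ‖q n - ζ‖ := by linarith
    have h6 := Real.log_le_log h3 h4
    rw [Real.log_mul (by norm_num) h5.ne'] at h6
    simp only [Pi.zero_apply]
    linarith [hC n]
  · filter_upwards [hlim] with ζ hζ
    have := hζ.add_const B
    rw [zero_add] at this
    refine this.congr fun n => ?_
    simp only [hk]; ring
  · intro n
    -- the integral of the `n`-th function is `greenPot (q n) - greenPot (q' n) + B`
    have hs : Integrable (fun ζ => Real.log ‖q n - ζ‖ - Real.log ‖q' n - ζ‖) μ :=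
      (hi _).sub (hi _)
    rw [integral_add hs (integrable_const _), integral_sub (hi _) (hi _)]
    have h1 := hcon n
    have h2 := hμ.greenPot_eq_zero hopen hsc hw (hq' n)
    simp only [greenPot] at h1 h2
    simp only [integral_const, probReal_univ, one_smul, hk]
    linarith

/-- Lower bound at a finite boundary point. The companion of `q n` is a nearest point outside `Ω`. -/
theorem IsHarmonicMeasure.not_greenPot_le_of_tendsto {Ω : Set ℂ} (hopen : IsOpen Ω)
    (hsc : SimplyConnectedSpace Ω) {w : ℂ} (hw : w ∈ Ω) {μ : Measure ℂ}
    (hμ : IsHarmonicMeasure Ω w μ) {q : ℕ → ℂ} {q₀ : ℂ} (hq₀ : q₀ ∉ Ω)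
    (hq : Tendsto q atTop (𝓝 q₀)) {c : ℝ} (hc : c < 0) : ¬ ∀ n, greenPot μ w (q n) ≤ c := by
  have hcl : IsClosed Ωᶜ := hopen.isClosed_compl
  have hex : ∀ n, ∃ p ∈ Ωᶜ, infDist (q n) Ωᶜ = dist (q n) p := fun n =>
    hcl.exists_infDist_eq_dist ⟨q₀, hq₀⟩ _
  choose q' hq' hd using hex
  have hmin : ∀ n ζ, ζ ∉ Ω → ‖q n - q' n‖ ≤ ‖q n - ζ‖ := by
    intro n ζ hζ
    rw [← dist_eq_norm, ← dist_eq_norm, ← hd n]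
    exact infDist_le_dist_of_mem hζ
  have hlim' : Tendsto q' atTop (𝓝 q₀) := by
    have h1 : Tendsto (fun n => ‖q n - q₀‖) atTop (𝓝 0) :=
      tendsto_iff_norm_sub_tendsto_zero.1 hq
    have h2 : Tendsto (fun n => q n - q' n) atTop (𝓝 0) :=
      squeeze_zero_norm (fun n => hmin n q₀ hq₀) h1
    simpa using hq.sub h2
  have hlog : ∀ (p : ℕ → ℂ), Tendsto p atTop (𝓝 q₀) → ∀ a, a ≠ q₀ →
      Tendsto (fun n => Real.log ‖p n - a‖) atTop (𝓝 (Real.log ‖q₀ - a‖)) := fun p hp a ha =>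
    ((hp.sub_const a).norm).log (norm_ne_zero_iff.2 (sub_ne_zero.2 ha.symm))
  have hwq : w ≠ q₀ := fun h => hq₀ (h ▸ hw)
  obtain ⟨C, hC⟩ := ((hlog _ hlim' w hwq).sub (hlog _ hq w hwq)).bddBelow_range
  have hne : ∀ᵐ ζ ∂μ, ζ ≠ q₀ := by
    rw [ae_iff]
    simpa using (hμ.log_norm_sub hopen hsc hw hq₀).2.1
  refine hμ.not_greenPot_le hopen hsc ⟨q₀, hq₀⟩ hw (C := -C) hq' (fun n ζ hζ => ?_)
    (fun n => ?_) ?_ hc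
  · have h1 := hmin n ζ hζ
    have h2 : ‖q' n - ζ‖ ≤ ‖q n - q' n‖ + ‖q n - ζ‖ := by
      rw [norm_sub_rev (q n) (q' n)]; simpa using norm_add_le (q' n - q n) (q n - ζ)
    linarith [norm_nonneg (q n - ζ)]
  · rw [neg_neg]
    exact hC ⟨n, rfl⟩
  · filter_upwards [hne] with ζ hζ
    have := ((hlog _ hq ζ hζ).sub (hlog _ hq w hwq)).sub
      ((hlog _ hlim' ζ hζ).sub (hlog _ hlim' w hwq))
    rwa [sub_self] at this

theorem tendsto_log_norm_sub_sub {q : ℕ → ℂ} (hq : Tendsto (fun n => ‖q n‖) atTop atTop)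
    (a b : ℂ) : Tendsto (fun n => Real.log ‖q n - a‖ - Real.log ‖q n - b‖) atTop (𝓝 0) := by
  have h1 : ∀ a : ℂ, Tendsto (fun n => ‖q n - a‖) atTop atTop := fun a =>
    tendsto_atTop_mono (fun n => norm_sub_norm_le (q n) a)
      (tendsto_atTop_add_const_right _ (-‖a‖) hq)
  have h2 : Tendsto (fun n => ‖q n - a‖ / ‖q n - b‖) atTop (𝓝 1) := by
    have h3 : Tendsto (fun n => ‖q n - a‖ / ‖q n - b‖ - 1) atTop (𝓝 0) := by
      refine squeeze_zero_norm' ?_ ((h1 b).const_div_atTop ‖a - b‖)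
      filter_upwards [(h1 b).eventually_gt_atTop 0] with n hn
      rw [div_sub_one hn.ne', norm_div, norm_norm]
      gcongr
      have := abs_norm_sub_norm_le (q n - a) (q n - b)
      rwa [sub_sub_sub_cancel_left, norm_sub_rev b a] at this
    simpa using h3.add_const 1
  have h3 := h2.log one_ne_zero
  rw [Real.log_one] at h3
  refine h3.congr' ?_
  filter_upwards [(h1 a).eventually_gt_atTop 0, (h1 b).eventually_gt_atTop 0] with n ha hb
  rw [Real.log_div ha.ne' hb.ne']

/-- Lower bound at infinity. The companion of `q n` is a nearest point among those points outside `Ω`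
that are at least half as far from a fixed `e ∉ Ω` as `q n` is; there are such points on the circle
about `e` through `q n`. -/
theorem IsHarmonicMeasure.not_greenPot_le_of_unbounded {Ω : Set ℂ} (hopen : IsOpen Ω)
    (hsc : SimplyConnectedSpace Ω) (hhyp : Ωᶜ.Nonempty) {w : ℂ} (hw : w ∈ Ω) {μ : Measure ℂ}
    (hμ : IsHarmonicMeasure Ω w μ) {c : ℝ} (hc : c < 0) :
    ¬ ∀ K : ℝ, ∃ q, K ≤ ‖q‖ ∧ greenPot μ w q ≤ c := by
  intro hcon
  obtain ⟨e, he⟩ := hhyp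
  obtain ⟨s, hs, hsΩ⟩ := exists_isRadSection hopen hsc he
  choose q hqK hqc using fun n : ℕ => hcon (4 * ‖w - e‖ + ‖e‖ + 4 + n)
  have hρ : ∀ n : ℕ, 4 * ‖w - e‖ + 4 + n ≤ ‖q n - e‖ := fun n => by
    linarith [hqK n, norm_sub_norm_le (q n) e]
  have hρ0 : ∀ n : ℕ, 0 < ‖q n - e‖ := fun n => by
    linarith [hρ n, norm_nonneg (w - e), (Nat.cast_nonneg n : (0 : ℝ) ≤ n)]
  set T : ℕ → Set ℂ := fun n => Ωᶜ ∩ {p | ‖q n - e‖ / 2 ≤ ‖p - e‖} with hT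
  have hTc : ∀ n, IsClosed (T n) := fun n =>
    hopen.isClosed_compl.inter (isClosed_le continuous_const (by fun_prop))
  have hsT : ∀ n, s ‖q n - e‖ ∈ T n := fun n => by
    refine ⟨hsΩ _, ?_⟩
    rw [Set.mem_ofPred_eq, hs.2 _ (norm_nonneg _)]
    linarith [hρ0 n]
  have hex : ∀ n, ∃ p ∈ T n, infDist (q n) (T n) = dist (q n) p := fun n =>
    (hTc n).exists_infDist_eq_dist ⟨_, hsT n⟩ _
  choose q' hq' hd using hex
  have hmin : ∀ n, ∀ ζ ∈ T n, ‖q n - q' n‖ ≤ ‖q n - ζ‖ := by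
    intro n ζ hζ
    rw [← dist_eq_norm, ← dist_eq_norm, ← hd n]
    exact infDist_le_dist_of_mem hζ
  have hmin' : ∀ n, ‖q n - q' n‖ ≤ 2 * ‖q n - e‖ := by
    intro n
    have h1 := norm_sub_le (q n - e) (s ‖q n - e‖ - e)
    rw [hs.2 _ (norm_nonneg _), sub_sub_sub_cancel_right] at h1
    linarith [hmin n _ (hsT n)]
  have hlim : Tendsto (fun n => ‖q n‖) atTop atTop :=
    tendsto_atTop_mono (fun n => by
      linarith [hqK n, norm_nonneg (w - e), norm_nonneg e] : ∀ n : ℕ, (n : ℝ) ≤ ‖q n‖)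
      tendsto_natCast_atTop_atTop
  have hlim' : Tendsto (fun n => ‖q' n‖) atTop atTop := by
    have h1 : Tendsto (fun n : ℕ => (n : ℝ) / 2 + (-‖e‖)) atTop atTop :=
      tendsto_atTop_add_const_right _ _
        (tendsto_natCast_atTop_atTop.atTop_div_const two_pos)
    refine tendsto_atTop_mono (fun n => ?_) h1
    have h2 : ‖q n - e‖ / 2 ≤ ‖q' n - e‖ := (hq' n).2
    linarith [hρ n, norm_nonneg (w - e), norm_sub_le (q' n) e]
  refine hμ.not_greenPot_le hopen hsc ⟨e, he⟩ hw (q := q) (q' := q') (C := Real.log 5)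
    (fun n => (hq' n).1) (fun n ζ hζ => ?_) (fun n => ?_) (ae_of_all _ fun ζ => ?_) hc hqc
  · have h2 : ‖q' n - ζ‖ ≤ ‖q n - q' n‖ + ‖q n - ζ‖ := by
      rw [norm_sub_rev (q n) (q' n)]; simpa using norm_add_le (q' n - q n) (q n - ζ)
    rcases le_or_gt (‖q n - e‖ / 2) ‖ζ - e‖ with h | h
    · linarith [hmin n ζ ⟨hζ, h⟩, norm_nonneg (q n - ζ)]
    · have h3 : ‖q n - e‖ ≤ ‖q n - ζ‖ + ‖ζ - e‖ := by
        simpa using norm_add_le (q n - ζ) (ζ - e)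
      linarith [hmin' n]
  · have h1 : ‖q n - e‖ / 2 ≤ ‖q' n - e‖ := (hq' n).2
    have h2 : ‖q' n - e‖ ≤ ‖q' n - w‖ + ‖w - e‖ := by
      simpa using norm_add_le (q' n - w) (w - e)
    have h3 := norm_sub_le (q n - e) (w - e)
    have h3' := norm_sub_norm_le (q n - e) (w - e)
    rw [sub_sub_sub_cancel_right] at h3 h3'
    have h4 := hρ n
    have h5 : (0 : ℝ) ≤ n := Nat.cast_nonneg n
    have h6 := norm_nonneg (w - e)
    have h7 : ‖q n - w‖ ≤ 5 * ‖q' n - w‖ := by linarith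
    have h8 : 0 < ‖q n - w‖ := by linarith
    have h9 := Real.log_le_log h8 h7
    rw [Real.log_mul (by norm_num) (by linarith)] at h9
    linarith
  · simpa using (tendsto_log_norm_sub_sub hlim ζ w).sub (tendsto_log_norm_sub_sub hlim' ζ w)

theorem IsHarmonicMeasure.continuousAt_integral_log {Ω : Set ℂ} (hopen : IsOpen Ω)
    (hsc : SimplyConnectedSpace Ω) (hhyp : Ωᶜ.Nonempty) {w : ℂ} (hw : w ∈ Ω) {μ : Measure ℂ}
    (hμ : IsHarmonicMeasure Ω w μ) {z : ℂ} (hz : z ∈ Ω) :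
    ContinuousAt (fun q => ∫ ζ, Real.log ‖q - ζ‖ ∂μ) z := by
  have := hμ.1
  obtain ⟨R, hR, hball⟩ := Metric.nhds_basis_closedBall.mem_iff.1 (hopen.mem_nhds hz)
  obtain ⟨δ, hδ, hsep⟩ := exists_separation hopen hR hball
  refine continuousAt_of_dominated
    (bound := fun ζ => |Real.log ‖z - ζ‖| + Real.log (2 + R / δ))
    (Eventually.of_forall fun q => (by fun_prop : Measurable _).aestronglyMeasurable) ?_
    ((hμ.integrable_log hopen hsc hhyp hw z).abs.add (integrable_const _)) ?_
  · filter_upwards [closedBall_mem_nhds z hR] with x hx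
    filter_upwards [hμ.ae_notMem hopen] with ζ hζ
    have h1 := abs_log_norm_sub_le hR hδ (hsep ζ hζ) hx
    have h2 := abs_sub_abs_le_abs_sub (Real.log ‖x - ζ‖) (Real.log ‖z - ζ‖)
    rw [Real.norm_eq_abs]
    linarith
  · filter_upwards [hμ.ae_notMem hopen] with ζ hζ
    refine ContinuousAt.log (by fun_prop) (norm_ne_zero_iff.2 (sub_ne_zero.2 ?_))
    exact fun h => hζ (h ▸ hz)

theorem IsHarmonicMeasure.continuousAt_greenPot {Ω : Set ℂ} (hopen : IsOpen Ω)
    (hsc : SimplyConnectedSpace Ω) (hhyp : Ωᶜ.Nonempty) {w : ℂ} (hw : w ∈ Ω) {μ : Measure ℂ}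
    (hμ : IsHarmonicMeasure Ω w μ) {z : ℂ} (hz : z ∈ Ω) (hzw : z ≠ w) :
    ContinuousAt (greenPot μ w) z :=
  (hμ.continuousAt_integral_log hopen hsc hhyp hw hz).sub
    (ContinuousAt.log (by fun_prop) (norm_ne_zero_iff.2 (sub_ne_zero.2 hzw)))

/-- `greenPot` has a logarithmic pole at `w`. -/
theorem IsHarmonicMeasure.tendsto_greenPot {Ω : Set ℂ} (hopen : IsOpen Ω)
    (hsc : SimplyConnectedSpace Ω) (hhyp : Ωᶜ.Nonempty) {w : ℂ} (hw : w ∈ Ω) {μ : Measure ℂ}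
    (hμ : IsHarmonicMeasure Ω w μ) : Tendsto (greenPot μ w) (𝓝[≠] w) atTop := by
  have h1 : Tendsto (fun q => ∫ ζ, Real.log ‖q - ζ‖ ∂μ) (𝓝[≠] w)
      (𝓝 (∫ ζ, Real.log ‖w - ζ‖ ∂μ)) :=
    (hμ.continuousAt_integral_log hopen hsc hhyp hw hw).tendsto.mono_left nhdsWithin_le_nhds
  have h2 : Tendsto (fun q => -Real.log ‖q - w‖) (𝓝[≠] w) atTop :=
    tendsto_neg_atBot_atTop.comp
      ((Real.tendsto_log_nhdsGT_zero).comp (tendsto_norm_sub_self_nhdsNE w))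
  exact (h1.add_atTop h2).congr fun q => by simp only [greenPot]; ring

theorem IsHarmonicMeasure.setIntegral_greenPot {Ω : Set ℂ} (hopen : IsOpen Ω)
    (hsc : SimplyConnectedSpace Ω) (hhyp : Ωᶜ.Nonempty) {w : ℂ} (hw : w ∈ Ω) {μ : Measure ℂ}
    (hμ : IsHarmonicMeasure Ω w μ) {z : ℂ} {R : ℝ} (hR : 0 < R)
    (hball : closedBall z R ⊆ Ω \ {w}) :
    IntegrableOn (greenPot μ w) (ball z R) ∧
    ∫ x in ball z R, greenPot μ w x = Real.pi * R ^ 2 * greenPot μ w z := by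
  have := hμ.1
  obtain ⟨δ, hδ, hsep⟩ := exists_separation (hopen.sdiff isClosed_singleton) hR hball
  have h1 := setIntegral_ball_logPotential (τ := μ) (s := fun ζ => ζ) measurable_id hR hδ
    ((hμ.ae_notMem hopen).mono fun ζ hζ => hsep ζ fun h => hζ h.1)
    (hμ.integrable_log hopen hsc hhyp hw z)
  have hwsep : R + δ ≤ ‖z - w‖ := hsep w fun h => h.2 rfl
  have h2 := setIntegral_ball_log_norm_sub hR hδ hwsep
  have h3 : IntegrableOn (fun x => Real.log ‖x - w‖) (ball z R) := by
    refine IntegrableOn.mono_set (ContinuousOn.integrableOn_compact (isCompact_closedBall z R) ?_)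
      ball_subset_closedBall
    refine ContinuousOn.log (by fun_prop) fun x hx => norm_ne_zero_iff.2 (sub_ne_zero.2 ?_)
    exact (hball hx).2
  refine ⟨h1.1.sub h3, ?_⟩
  simp only [greenPot]
  rw [integral_sub h1.1 h3, h1.2, h2]
  ring

/-- The strong minimum principle on `Ω \ {w}`. It is run on the connected set `Ω` rather than
`Ω \ {w}`, with `w` placed among the points where the value exceeds the minimum. -/
theorem IsHarmonicMeasure.greenPot_ne_min {Ω : Set ℂ} (hopen : IsOpen Ω)
    (hconn : IsConnected Ω)
    (hsc : SimplyConnectedSpace Ω) (hhyp : Ωᶜ.Nonempty) {w : ℂ} (hw : w ∈ Ω) {μ : Measure ℂ}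
    (hμ : IsHarmonicMeasure Ω w μ) {x₀ : ℂ} (hx₀ : x₀ ∈ Ω \ {w}) :
    ¬ ∀ q ∈ Ω \ {w}, greenPot μ w x₀ ≤ greenPot μ w q := by
  intro hmin
  set u := greenPot μ w with hu
  set m := u x₀
  have hU : IsOpen (Ω \ {w}) := hopen.sdiff isClosed_singleton
  have hcont : ∀ z ∈ Ω \ {w}, ContinuousAt u z := fun z hz =>
    hμ.continuousAt_greenPot hopen hsc hhyp hw hz.1 hz.2
  have hM : IsOpen {q | q ∈ Ω \ {w} ∧ u q = m} := by
    rw [isOpen_iff_mem_nhds]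
    rintro z ⟨hz, hzm⟩
    obtain ⟨R, hR, hball⟩ := Metric.nhds_basis_closedBall.mem_iff.1 (hU.mem_nhds hz)
    obtain ⟨hi, hint⟩ := hμ.setIntegral_greenPot hopen hsc hhyp hw hR hball
    have hsub := ball_subset_closedBall.trans hball
    have hcst : IntegrableOn (fun _ : ℂ => m) (ball z R) :=
      integrableOn_const measure_ball_lt_top.ne
    -- `u - m` is continuous, nonnegative, and has zero mean over the ball, so it vanishes there
    have h0 : ∫ x in ball z R, (u x - m) = 0 := by
      rw [integral_sub hi hcst, hint, ← hu, hzm, setIntegral_const, Measure.real,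
        Complex.volume_ball]
      simp [ENNReal.toReal_ofReal hR.le]
      ring
    have h1 : 0 ≤ᵐ[volume.restrict (ball z R)] fun x => u x - m := by
      filter_upwards [ae_restrict_mem measurableSet_ball] with x hx
      exact sub_nonneg.2 (hmin x (hsub hx))
    have h2 := (integral_eq_zero_iff_of_nonneg_ae h1 (hi.sub hcst)).1 h0
    have h3 : Set.EqOn (fun x => u x - m) 0 (ball z R) := by
      refine Measure.eqOn_open_of_ae_eq h2 isOpen_ball (fun x hx => ?_) continuousOn_const
      exact ((hcont x (hsub hx)).sub continuousAt_const).continuousWithinAt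
    filter_upwards [ball_mem_nhds z hR] with x hx
    exact ⟨hsub hx, sub_eq_zero.1 (h3 hx)⟩
  have hW : IsOpen {q | q ∈ Ω ∧ (q = w ∨ m < u q)} := by
    rw [isOpen_iff_mem_nhds]
    rintro z ⟨hz, hzm⟩
    by_cases hzw : z = w
    · subst hzw
      have h1 := (hμ.tendsto_greenPot hopen hsc hhyp hz).eventually_gt_atTop m
      rw [eventually_nhdsWithin_iff] at h1
      filter_upwards [h1, hopen.mem_nhds hz] with x hx hx'
      by_cases hxz : x = z
      · exact ⟨hx', Or.inl hxz⟩
      · exact ⟨hx', Or.inr (hx hxz)⟩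
    · have h1 := (hcont z ⟨hz, hzw⟩).eventually_const_lt (hzm.resolve_left hzw)
      filter_upwards [h1, hopen.mem_nhds hz] with x hx hx' using ⟨hx', Or.inr hx⟩
  obtain ⟨x, -, hxM, hxW⟩ := hconn.2 _ _ hM hW
    (fun x hx => by
      by_cases hxw : x = w
      · exact Or.inr ⟨hx, Or.inl hxw⟩
      · rcases (hmin x ⟨hx, hxw⟩).eq_or_lt with h | h
        · exact Or.inl ⟨⟨hx, hxw⟩, h.symm⟩
        · exact Or.inr ⟨hx, Or.inr h⟩)
    ⟨x₀, hx₀.1, hx₀, rfl⟩ ⟨w, hw, hw, Or.inl rfl⟩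
  rcases hxW.2 with h | h
  · exact hxM.1.2 h
  · exact h.ne' hxM.2

theorem IsHarmonicMeasure.greenPot_nonneg {Ω : Set ℂ} (hopen : IsOpen Ω)
    (hconn : IsConnected Ω)
    (hsc : SimplyConnectedSpace Ω) (hhyp : Ωᶜ.Nonempty) {w : ℂ} (hw : w ∈ Ω) {μ : Measure ℂ}
    (hμ : IsHarmonicMeasure Ω w μ) {q : ℂ} (hq : q ∈ Ω \ {w}) : 0 ≤ greenPot μ w q := by
  by_contra! hneg
  set c := greenPot μ w q with hc
  set S : Set ℂ := {x | x ∈ Ω \ {w} ∧ greenPot μ w x ≤ c} with hS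
  have hclosed : IsClosed S := by
    refine IsSeqClosed.isClosed fun x x₀ hx hlim => ?_
    have hx₀ : x₀ ∈ Ω := by
      by_contra h
      exact hμ.not_greenPot_le_of_tendsto hopen hsc hw h hlim hneg fun n => (hx n).2
    have hx₀w : x₀ ≠ w := by
      rintro rfl
      have h1 : Tendsto x atTop (𝓝[≠] x₀) :=
        tendsto_nhdsWithin_iff.2 ⟨hlim, Eventually.of_forall fun n => (hx n).1.2⟩
      obtain ⟨n, hn⟩ := (((hμ.tendsto_greenPot hopen hsc hhyp hw).comp h1).eventually_gt_atTop
        c).exists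
      exact absurd (hx n).2 (not_le.2 hn)
    exact ⟨⟨hx₀, hx₀w⟩, le_of_tendsto'
      ((hμ.continuousAt_greenPot hopen hsc hhyp hw hx₀ hx₀w).tendsto.comp hlim)
      fun n => (hx n).2⟩
  have hbdd : Bornology.IsBounded S := by
    by_contra h
    rw [isBounded_iff_forall_norm_le] at h
    push Not at h
    refine hμ.not_greenPot_le_of_unbounded hopen hsc hhyp hw hneg fun K => ?_
    obtain ⟨x, hx, hxK⟩ := h K
    exact ⟨x, hxK.le, hx.2⟩
  obtain ⟨x₀, hx₀, hmin⟩ := (isCompact_of_isClosed_isBounded hclosed hbdd).exists_isMinOn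
    ⟨q, hq, le_rfl⟩ (f := greenPot μ w) fun x hx =>
      (hμ.continuousAt_greenPot hopen hsc hhyp hw hx.1.1 hx.1.2).continuousWithinAt
  refine hμ.greenPot_ne_min hopen hconn hsc hhyp hw hx₀.1 fun x hx => ?_
  rcases le_total (greenPot μ w x) c with h | h
  · exact hmin ⟨hx, h⟩
  · exact hx₀.2.trans h

/-- The domain is determined by `μ` and `w`. -/
theorem IsHarmonicMeasure.mem_iff {Ω : Set ℂ} (hopen : IsOpen Ω) (hconn : IsConnected Ω)
    (hsc : SimplyConnectedSpace Ω) (hhyp : Ωᶜ.Nonempty) {w : ℂ} (hw : w ∈ Ω) {μ : Measure ℂ}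
    (hμ : IsHarmonicMeasure Ω w μ) (q : ℂ) : q ∈ Ω ↔ q = w ∨ greenPot μ w q ≠ 0 := by
  constructor
  · intro hq
    by_contra! h
    refine hμ.greenPot_ne_min hopen hconn hsc hhyp hw ⟨hq, h.1⟩ fun x hx => ?_
    rw [h.2]
    exact hμ.greenPot_nonneg hopen hconn hsc hhyp hw hx
  · rintro (rfl | h)
    · exact hw
    · by_contra hq
      exact h (hμ.greenPot_eq_zero hopen hsc hw hq)

/-- A harmonic measure determines its domain: two simply connected hyperbolic
domains sharing a point and having the same harmonic measure at that point
coincide. -/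
theorem harmonic_measure_determines_domain
    (Ω Ω' : Set ℂ)
    (hopen : IsOpen Ω) (hopen' : IsOpen Ω')
    (hconn : IsConnected Ω) (hconn' : IsConnected Ω')
    (hsc : SimplyConnectedSpace Ω) (hsc' : SimplyConnectedSpace Ω')
    (hhyp : Ωᶜ.Nonempty) (hhyp' : Ω'ᶜ.Nonempty)
    (w : ℂ) (hw : w ∈ Ω) (hw' : w ∈ Ω')
    (μ : Measure ℂ)
    (hμ : IsHarmonicMeasure Ω w μ) (hμ' : IsHarmonicMeasure Ω' w μ) :
    Ω = Ω' := by
  ext q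
  rw [hμ.mem_iff hopen hconn hsc hhyp hw, hμ'.mem_iff hopen' hconn' hsc' hhyp' hw']
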